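/- Let x ∈ S_n' be nilpotent. Define, for 1 ≤ i ≤ m+n, ẽ_i = ê_i + Σ_{k=1}^{n} (x^k)_{m+n, i} ê_{m+n+k} + Σ_{l=1}^{m+n} (x^l)_{m+2n, i} f̂_{n+l}, and for 1 ≤ j ≤ n, f̃_j = f̂_j + Σ_{k=1}^{n} (x^k)_{m+n, m+n+j} ê_{m+n+k} + Σ_{l=1}^{m+n} (x^l)_{m+2n, m+n+j} f̂_{n+l}. Then the subspace L = span(ẽ_1, …, ẽ_{m+n}, f̃_1, …, f̃_n) of V satisfies: z L ⊆ L; P restricts to a linear isomorphism from L onto W; and P ∘ z ∘ (P|_L)^{−1} = x as endomorphisms of W. (Explicit construction of the z-stable lift from the proof of Lemma 2.5 of the paper.) -/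

import Mathlib

/-!
The lift of `w ∈ W` to `V` is forced by `z`-equivariance. Write `γ` and `δ` for the coordinates
of `w` along `u_1` and `u_{m+n+1}`, the bottoms of the two Jordan blocks, and set
`T w = ∑_{i < N} γ(x^i w) ê_{i+1} + ∑_{i < N} δ(x^i w) f̂_{i+1}`, where `N = m + 2n`.

* `z ∘ T = T ∘ x` (`bigZ_lift`): both sides shift the exponent of `x` by one, and at the two top
  coordinates, where `z` gives `0`, the right-hand side contains `x^N`, which vanishes as `x` is
  nilpotent on a space of dimension `N`.
* Since `x` agrees with `z_n` outside rows `m+n` and `m+2n`, the coordinate of `w` at height `i`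
  in a block is `γ(x^i w)`, respectively `δ(x^i w)` (`coord_pow_left`, `coord_pow_right`). Hence
  `P ∘ T = id` (`proj_lift`), and `T u_c` is the vector `ẽ_c` or `f̃_{c-m-n}` (`lift_stdVec`).

So `L` is the range of `T`, and the three claims follow formally.
-/

open Module BigOperators

noncomputable section

/-- The `k`-th standard basis vector `u_k` of `ℂ^(m+2n)`, indexed `1`-based;
it is zero if `k` is out of the range `1, …, m+2n`. -/
def stdVec (m n : ℕ) (k : ℕ) : Fin (m + 2*n) → ℂ := fun i => if (i : ℕ) + 1 = k then 1 else 0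

/-- The matrix of the two-block nilpotent `z_n` of Jordan type `(m+n, n)`:
`z_n u_i = u_{i-1}` for `2 ≤ i ≤ m+n` and for `m+n+2 ≤ i ≤ m+2n`, and
`z_n u_1 = z_n u_{m+n+1} = 0`. -/
def zMat (m n : ℕ) : Matrix (Fin (m + 2*n)) (Fin (m + 2*n)) ℂ :=
  fun i j => if (j : ℕ) = (i : ℕ) + 1 ∧ (j : ℕ) ≠ m + n then 1 else 0

/-- The two-block nilpotent `z_n` as an endomorphism of `ℂ^(m+2n)`. -/
def zn (m n : ℕ) : Module.End ℂ (Fin (m + 2*n) → ℂ) := Matrix.toLin' (zMat m n)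

/-- The enlarged slice `S_n' ⊆ End(ℂ^(m+2n))`: the endomorphisms whose matrix agrees
with that of `z_n` outside rows `m+n` and `m+2n`, i.e. `x u_j - z_n u_j` lies in
`span{u_{m+n}, u_{m+2n}}` for every `j`. -/
def slice' (m n : ℕ) : Set (Module.End ℂ (Fin (m + 2*n) → ℂ)) :=
  { x | ∀ j : ℕ, x (stdVec m n j) - zn m n (stdVec m n j) ∈
      Submodule.span ℂ {stdVec m n (m + n), stdVec m n (m + 2*n)} }

/-- The matrix entry `x_{p,q}` (`1`-based) of an endomorphism of `ℂ^(m+2n)`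
in the standard basis `u_1, …, u_{m+2n}`. -/
def entry (m n : ℕ) (x : Module.End ℂ (Fin (m + 2*n) → ℂ)) (p q : ℕ) : ℂ :=
  ∑ i, stdVec m n p i * x (stdVec m n q) i

/-- The standard basis of `V = ℂ^(2(m+2n))`, indexed `1`-based: for `1 ≤ k ≤ m+2n`,
`bigVec k` is `ê_k`, and for `1 ≤ j ≤ m+2n`, `bigVec (m+2n+j)` is `f̂_j`. -/
def bigVec (m n : ℕ) (k : ℕ) : Fin (2*(m + 2*n)) → ℂ := fun i => if (i : ℕ) + 1 = k then 1 else 0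

/-- The matrix of `z ∈ End(V)`, `z ê_i = ê_{i-1}`, `z f̂_j = f̂_{j-1}` (`ê_0 = f̂_0 = 0`). -/
def bigZMat (m n : ℕ) : Matrix (Fin (2*(m + 2*n))) (Fin (2*(m + 2*n))) ℂ :=
  fun i j => if (j : ℕ) = (i : ℕ) + 1 ∧ (j : ℕ) ≠ m + 2*n then 1 else 0

/-- The endomorphism `z` of `V = ℂ^(2(m+2n))`. -/
def bigZ (m n : ℕ) : Module.End ℂ (Fin (2*(m + 2*n)) → ℂ) := Matrix.toLin' (bigZMat m n)

/-- The matrix of the projection `P : V → W ≅ ℂ^(m+2n)`: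
`P ê_i = u_i` for `i ≤ m+n`, `P ê_i = 0` for `i > m+n`,
`P f̂_j = u_{m+n+j}` for `j ≤ n`, `P f̂_j = 0` for `j > n`. -/
def projMat (m n : ℕ) : Matrix (Fin (m + 2*n)) (Fin (2*(m + 2*n))) ℂ :=
  fun i j => if ((j : ℕ) = (i : ℕ) ∧ (i : ℕ) < m + n) ∨
      ((j : ℕ) = (i : ℕ) + n ∧ m + n ≤ (i : ℕ)) then 1 else 0

/-- The projection `P : V → W ≅ ℂ^(m+2n)` (composed with the identification `W ≅ ℂ^(m+2n)`
via `ê_i ↦ u_i`, `f̂_j ↦ u_{m+n+j}`). -/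
def proj (m n : ℕ) : (Fin (2*(m + 2*n)) → ℂ) →ₗ[ℂ] (Fin (m + 2*n) → ℂ) :=
  Matrix.toLin' (projMat m n)


/-- The lifted basis vectors: for `1 ≤ c ≤ m+n`, `tildeVec c` is
`ẽ_c = ê_c + ∑_{k=1}^{n} (x^k)_{m+n,c} ê_{m+n+k} + ∑_{l=1}^{m+n} (x^l)_{m+2n,c} f̂_{n+l}`,
and for `c = m+n+j` with `1 ≤ j ≤ n`, `tildeVec c` is
`f̃_j = f̂_j + ∑_{k=1}^{n} (x^k)_{m+n,c} ê_{m+n+k} + ∑_{l=1}^{m+n} (x^l)_{m+2n,c} f̂_{n+l}`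
(recall `f̂_j = bigVec (m+2n+j)`). -/
def tildeVec (m n : ℕ) (x : Module.End ℂ (Fin (m + 2*n) → ℂ)) (c : ℕ) :
    Fin (2*(m + 2*n)) → ℂ :=
  (if c ≤ m + n then bigVec m n c else bigVec m n (c + n))
    + (∑ k ∈ Finset.Icc 1 n, entry m n (x ^ k) (m + n) c • bigVec m n (m + n + k))
    + (∑ l ∈ Finset.Icc 1 (m + n),
        entry m n (x ^ l) (m + 2*n) c • bigVec m n (m + 2*n + n + l))

/-! ### Coordinates and elements of the slice -/

/-- The coordinate of `w` at the `0`-based index `k`, with value `0` out of range. -/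
def coord (m n : ℕ) (k : ℕ) : (Fin (m + 2*n) → ℂ) →ₗ[ℂ] ℂ :=
  if h : k < m + 2*n then LinearMap.proj ⟨k, h⟩ else 0

lemma coord_apply (m n k : ℕ) (h : k < m + 2*n) (w : Fin (m + 2*n) → ℂ) :
    coord m n k w = w ⟨k, h⟩ := by
  simp [coord, h]

lemma coord_stdVec (m n k c : ℕ) (h : k < m + 2*n) :
    coord m n k (stdVec m n c) = if k + 1 = c then 1 else 0 := by
  rw [coord_apply m n k h]; rfl

lemma stdVec_succ (m n : ℕ) (j : Fin (m + 2*n)) :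
    stdVec m n ((j : ℕ) + 1) = Pi.single j 1 := by
  ext i
  simp [stdVec, Pi.single_apply, Fin.ext_iff]

lemma entry_eq_coord (m n : ℕ) (x : Module.End ℂ (Fin (m + 2*n) → ℂ)) (p q : ℕ)
    (h : p < m + 2*n) : entry m n x (p + 1) q = coord m n p (x (stdVec m n q)) := by
  rw [coord_apply m n p h, entry, Finset.sum_eq_single ⟨p, h⟩]
  · simp [stdVec]
  · intro b _ hb
    have : (b : ℕ) ≠ p := fun e => hb (Fin.ext e)
    simp [stdVec, this]
  · simp

lemma zn_apply (m n : ℕ) (w : Fin (m + 2*n) → ℂ) (i : ℕ) (h : i + 1 < m + 2*n)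
    (h1 : i + 1 ≠ m + n) : coord m n i (zn m n w) = coord m n (i + 1) w := by
  rw [coord_apply m n i (by omega), coord_apply m n _ h, zn, Matrix.toLin'_apply, Matrix.mulVec,
    dotProduct, Finset.sum_eq_single ⟨i + 1, h⟩]
  · simp [zMat, h1]
  · intro b _ hb
    have : (b : ℕ) ≠ i + 1 := fun e => hb (Fin.ext e)
    simp [zMat, this]
  · simp

/-- Away from rows `m+n` and `m+2n`, an element of the slice shifts coordinates as `z_n` does. -/
lemma coord_slice (m n : ℕ) (x : Module.End ℂ (Fin (m + 2*n) → ℂ)) (hx : x ∈ slice' m n)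
    (w : Fin (m + 2*n) → ℂ) (i : ℕ) (h : i + 1 < m + 2*n) (h1 : i + 1 ≠ m + n) :
    coord m n i (x w) = coord m n (i + 1) w := by
  rw [← zn_apply m n w i h h1]
  have key : coord m n i ∘ₗ x = coord m n i ∘ₗ zn m n := by
    refine LinearMap.pi_ext' fun j => LinearMap.ext_ring ?_
    have hle : Submodule.span ℂ {stdVec m n (m + n), stdVec m n (m + 2*n)}
        ≤ LinearMap.ker (coord m n i) := by
      rw [Submodule.span_le]
      rintro v (rfl | rfl)
      · simp [coord_stdVec m n i _ (by omega : i < m + 2*n), h1]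
      · simp [coord_stdVec m n i _ (by omega : i < m + 2*n), h.ne]
    have := hle (hx ((j : ℕ) + 1))
    rw [LinearMap.mem_ker, map_sub, sub_eq_zero, stdVec_succ] at this
    simpa using this
  exact LinearMap.congr_fun key w

/-- Applying `x` repeatedly moves any coordinate of the first block down to `u_1`. -/
lemma coord_pow_left (m n : ℕ) (x : Module.End ℂ (Fin (m + 2*n) → ℂ)) (hx : x ∈ slice' m n)
    (i : ℕ) (h : i < m + n) (w : Fin (m + 2*n) → ℂ) :
    coord m n 0 ((x ^ i) w) = coord m n i w := by
  induction i generalizing w with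
  | zero => simp
  | succ i ih =>
    rw [pow_succ, Module.End.mul_apply, ih (by omega),
      coord_slice m n x hx w i (by omega) (by omega)]

/-- Applying `x` repeatedly moves any coordinate of the second block down to `u_{m+n+1}`. -/
lemma coord_pow_right (m n : ℕ) (x : Module.End ℂ (Fin (m + 2*n) → ℂ)) (hx : x ∈ slice' m n)
    (i : ℕ) (h : i < n) (w : Fin (m + 2*n) → ℂ) :
    coord m n (m + n) ((x ^ i) w) = coord m n (m + n + i) w := by
  induction i generalizing w with
  | zero => simp
  | succ i ih =>
    rw [pow_succ, Module.End.mul_apply, ih (by omega),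
      coord_slice m n x hx w (m + n + i) (by omega) (by omega)]
    rfl

/-! ### The equivariant lift -/

/-- The lift `T : W → V`: the coordinates of `T w` along `ê_{i+1}` and `f̂_{i+1}` are the
coordinates of `x^i w` along `u_1` and `u_{m+n+1}`. -/
def lift (m n : ℕ) (x : Module.End ℂ (Fin (m + 2*n) → ℂ)) :
    (Fin (m + 2*n) → ℂ) →ₗ[ℂ] (Fin (2*(m + 2*n)) → ℂ) :=
  LinearMap.pi fun i => if (i : ℕ) < m + 2*n then coord m n 0 ∘ₗ (x ^ (i : ℕ))
    else coord m n (m + n) ∘ₗ (x ^ ((i : ℕ) - (m + 2*n)))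

lemma lift_apply (m n : ℕ) (x : Module.End ℂ (Fin (m + 2*n) → ℂ)) (w : Fin (m + 2*n) → ℂ)
    (i : Fin (2*(m + 2*n))) : lift m n x w i =
      if (i : ℕ) < m + 2*n then coord m n 0 ((x ^ (i : ℕ)) w)
      else coord m n (m + n) ((x ^ ((i : ℕ) - (m + 2*n))) w) := by
  simp only [lift, LinearMap.pi_apply]
  split_ifs <;> rfl

lemma pow_dim_eq_zero (m n : ℕ) (x : Module.End ℂ (Fin (m + 2*n) → ℂ)) (hnil : IsNilpotent x) :
    x ^ (m + 2*n) = 0 := by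
  have h := hnil.charpoly_eq_X_pow_finrank
  have h2 := LinearMap.aeval_self_charpoly x
  rw [h] at h2
  simpa using h2

lemma bigZ_apply (m n : ℕ) (v : Fin (2*(m + 2*n)) → ℂ) (i : Fin (2*(m + 2*n))) :
    bigZ m n v i = if h : (i : ℕ) + 1 < 2*(m + 2*n) ∧ (i : ℕ) + 1 ≠ m + 2*n
      then v ⟨i + 1, h.1⟩ else 0 := by
  rw [bigZ, Matrix.toLin'_apply, Matrix.mulVec, dotProduct]
  split_ifs with h
  · rw [Finset.sum_eq_single ⟨(i : ℕ) + 1, h.1⟩]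
    · simp [bigZMat, h.2]
    · intro b _ hb
      have : (b : ℕ) ≠ i + 1 := fun e => hb (Fin.ext e)
      simp [bigZMat, this]
    · simp
  · refine Finset.sum_eq_zero fun b _ => ?_
    have hb := b.2
    have : ¬ ((b : ℕ) = (i : ℕ) + 1 ∧ (b : ℕ) ≠ m + 2*n) := by omega
    simp only [bigZMat, this, if_false, zero_mul]

lemma bigZ_lift (m n : ℕ) (x : Module.End ℂ (Fin (m + 2*n) → ℂ)) (hnil : IsNilpotent x)
    (w : Fin (m + 2*n) → ℂ) : bigZ m n (lift m n x w) = lift m n x (x w) := by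
  have hN := pow_dim_eq_zero m n x hnil
  ext i
  have hi := i.2
  rw [bigZ_apply, lift_apply m n x (x w)]
  simp only [← Module.End.mul_apply, ← pow_succ]
  by_cases h : (i : ℕ) + 1 < 2*(m + 2*n) ∧ (i : ℕ) + 1 ≠ m + 2*n
  · rw [dif_pos h, lift_apply]
    dsimp only
    by_cases h1 : (i : ℕ) < m + 2*n
    · rw [if_pos h1, if_pos (by omega)]
    · rw [if_neg h1, if_neg (by omega), show (i : ℕ) + 1 - (m + 2*n) = i - (m + 2*n) + 1 by omega]
  · rw [dif_neg h]
    by_cases h1 : (i : ℕ) < m + 2*n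
    · rw [if_pos h1, show (i : ℕ) + 1 = m + 2*n by omega, hN]
      simp
    · rw [if_neg h1, show (i : ℕ) - (m + 2*n) + 1 = m + 2*n by omega, hN]
      simp

lemma proj_lift (m n : ℕ) (x : Module.End ℂ (Fin (m + 2*n) → ℂ)) (hx : x ∈ slice' m n)
    (w : Fin (m + 2*n) → ℂ) : proj m n (lift m n x w) = w := by
  ext i
  have hi := i.2
  rw [proj, Matrix.toLin'_apply, Matrix.mulVec, dotProduct]
  by_cases h : (i : ℕ) < m + n
  · rw [Finset.sum_eq_single ⟨(i : ℕ), by omega⟩]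
    · rw [lift_apply]
      simp only [projMat, h, hi, if_true]
      rw [coord_pow_left m n x hx _ h, coord_apply m n _ hi]
      simp
    · intro b _ hb
      have : (b : ℕ) ≠ i := fun e => hb (Fin.ext e)
      simp [projMat, this, h]
    · simp
  · rw [Finset.sum_eq_single ⟨(i : ℕ) + n, by omega⟩]
    · rw [lift_apply]
      dsimp only
      rw [if_neg (by omega), coord_pow_right m n x hx _ (by omega),
        show m + n + ((i : ℕ) + n - (m + 2*n)) = i by omega, coord_apply m n _ hi]
      simp [projMat, not_lt.1 h]
    · intro b _ hb
      have : (b : ℕ) ≠ i + n := fun e => hb (Fin.ext e)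
      simp [projMat, this, h]
    · simp

/-! ### Identification of the span with the range of the lift -/

/-- A sum of multiples of consecutive basis vectors of `V`, evaluated at a coordinate. -/
lemma sum_bigVec_apply (m n s r : ℕ) (a : ℕ → ℂ) (i : Fin (2*(m + 2*n))) :
    (∑ k ∈ Finset.Icc 1 r, a k • bigVec m n (s + k)) i =
      if s ≤ (i : ℕ) ∧ (i : ℕ) < s + r then a ((i : ℕ) + 1 - s) else 0 := by
  rw [Finset.sum_apply]
  simp only [Pi.smul_apply, bigVec, smul_eq_mul, mul_ite, mul_one, mul_zero]
  split_ifs with h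
  · rw [Finset.sum_eq_single ((i : ℕ) + 1 - s)]
    · rw [if_pos (by omega)]
    · intro b _ hb
      rw [if_neg (by omega)]
    · intro hb
      exact absurd (Finset.mem_Icc.2 ⟨by omega, by omega⟩) hb
  · refine Finset.sum_eq_zero fun b hb => ?_
    rw [Finset.mem_Icc] at hb
    rw [if_neg (by omega)]

/-- The lift sends the standard basis to the vectors `ẽ_i`, `f̃_j`: the entries of `x^k` in rows
`m+n` and `m+2n` are the bottom coordinates of `x^(m+n-1+k)` and `x^(n-1+k)`. -/
lemma lift_stdVec (m n : ℕ) (hn : 1 ≤ n) (x : Module.End ℂ (Fin (m + 2*n) → ℂ))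
    (hx : x ∈ slice' m n) (c : Fin (m + 2*n)) :
    lift m n x (stdVec m n ((c : ℕ) + 1)) = tildeVec m n x ((c : ℕ) + 1) := by
  have hc := c.2
  ext i
  have hi := i.2
  have hbase : (if (c : ℕ) + 1 ≤ m + n then bigVec m n ((c : ℕ) + 1)
      else bigVec m n ((c : ℕ) + 1 + n)) i
      = if ((c : ℕ) < m + n ∧ (i : ℕ) = c) ∨ (m + n ≤ (c : ℕ) ∧ (i : ℕ) = c + n)
        then 1 else 0 := by
    split_ifs with h1 h2 h2
    all_goals simp only [bigVec]
    · rw [if_pos (by omega)]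
    · rw [if_neg (by omega)]
    · rw [if_pos (by omega)]
    · rw [if_neg (by omega)]
  rw [tildeVec, Pi.add_apply, Pi.add_apply, sum_bigVec_apply, sum_bigVec_apply, hbase, lift_apply]
  have e1 : ∀ k, entry m n (x ^ k) (m + n) ((c : ℕ) + 1)
      = coord m n 0 ((x ^ (m + n - 1 + k)) (stdVec m n ((c : ℕ) + 1))) := by
    intro k
    rw [pow_add, Module.End.mul_apply, coord_pow_left m n x hx _ (by omega),
      ← entry_eq_coord m n _ _ _ (by omega), Nat.sub_add_cancel (by omega)]
  have e2 : ∀ k, entry m n (x ^ k) (m + 2*n) ((c : ℕ) + 1)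
      = coord m n (m + n) ((x ^ (n - 1 + k)) (stdVec m n ((c : ℕ) + 1))) := by
    intro k
    rw [pow_add, Module.End.mul_apply, coord_pow_right m n x hx _ (by omega),
      ← entry_eq_coord m n _ _ _ (by omega), show m + n + (n - 1) + 1 = m + 2*n by omega]
  rw [e1, e2]
  -- The four ranges of coordinates of `V`: `ê_{≤ m+n}`, `ê_{> m+n}`, `f̂_{≤ n}`, `f̂_{> n}`.
  rcases (by omega : (i : ℕ) < m + n ∨ (m + n ≤ (i : ℕ) ∧ (i : ℕ) < m + 2*n) ∨
    (m + 2*n ≤ (i : ℕ) ∧ (i : ℕ) < m + 2*n + n) ∨ m + 2*n + n ≤ (i : ℕ)) with h | h | h | h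
  · rw [if_pos (by omega), if_neg (by omega : ¬ (m + n ≤ (i : ℕ) ∧ (i : ℕ) < m + n + n)),
      if_neg (by omega : ¬ (m + 2*n + n ≤ (i : ℕ) ∧ (i : ℕ) < m + 2*n + n + (m + n))),
      coord_pow_left m n x hx _ h, coord_stdVec m n _ _ (by omega), add_zero, add_zero]
    exact if_congr (by omega) rfl rfl
  · rw [if_pos (by omega), if_neg (by omega : ¬ (((c : ℕ) < m + n ∧ (i : ℕ) = c) ∨ _)),
      if_pos (by omega), if_neg (by omega), add_zero, zero_add,
      show m + n - 1 + ((i : ℕ) + 1 - (m + n)) = i by omega]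
  · rw [if_neg (by omega), if_neg (by omega : ¬ (m + n ≤ (i : ℕ) ∧ (i : ℕ) < m + n + n)),
      if_neg (by omega : ¬ (m + 2*n + n ≤ (i : ℕ) ∧ (i : ℕ) < m + 2*n + n + (m + n))),
      coord_pow_right m n x hx _ (by omega), coord_stdVec m n _ _ (by omega), add_zero, add_zero]
    exact if_congr (by omega) rfl rfl
  · rw [if_neg (by omega), if_neg (by omega : ¬ (((c : ℕ) < m + n ∧ (i : ℕ) = c) ∨ _)),
      if_neg (by omega), if_pos (by omega), add_zero, zero_add,
      show n - 1 + ((i : ℕ) + 1 - (m + 2*n + n)) = i - (m + 2*n) by omega]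

lemma span_eq_range_lift (m n : ℕ) (hn : 1 ≤ n) (x : Module.End ℂ (Fin (m + 2*n) → ℂ))
    (hx : x ∈ slice' m n) :
    Submodule.span ℂ (Set.range fun c : Fin (m + 2*n) => tildeVec m n x ((c : ℕ) + 1))
      = LinearMap.range (lift m n x) := by
  have h : (fun c : Fin (m + 2*n) => tildeVec m n x ((c : ℕ) + 1))
      = lift m n x ∘ (Pi.basisFun ℂ (Fin (m + 2*n))) := by
    funext c
    rw [← lift_stdVec m n hn x hx c, stdVec_succ]
    simp
  rw [h, Set.range_comp, Submodule.span_image, Basis.span_eq, Submodule.map_top]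

/-- For nilpotent `x ∈ S_n'`, the span `L` of the lifted basis vectors
`ẽ_1, …, ẽ_{m+n}, f̃_1, …, f̃_n` is `z`-stable, `P` restricts to a linear isomorphism
from `L` onto `W ≅ ℂ^(m+2n)`, and `P ∘ z ∘ (P|_L)⁻¹ = x`. -/
theorem span_tildeVec_is_z_stable_lift (m n : ℕ) (hn : 1 ≤ n)
    (x : Module.End ℂ (Fin (m + 2*n) → ℂ)) (hx : x ∈ slice' m n)
    (hnil : IsNilpotent x) :
    ∀ L : Submodule ℂ (Fin (2*(m + 2*n)) → ℂ),
      L = Submodule.span ℂ (Set.range fun c : Fin (m + 2*n) =>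
            tildeVec m n x ((c : ℕ) + 1)) →
      (∀ v ∈ L, bigZ m n v ∈ L) ∧
      Function.Bijective ((proj m n).domRestrict L) ∧
      (∀ v ∈ L, proj m n (bigZ m n v) = x (proj m n v)) := by
  rintro L rfl
  rw [span_eq_range_lift m n hn x hx]
  refine ⟨?_, ⟨?_, ?_⟩, ?_⟩
  · rintro _ ⟨w, rfl⟩
    exact ⟨x w, (bigZ_lift m n x hnil w).symm⟩
  · rintro ⟨_, w, rfl⟩ ⟨_, w', rfl⟩ h
    simp only [LinearMap.domRestrict_apply, proj_lift m n x hx] at h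
    subst h
    rfl
  · intro w
    exact ⟨⟨lift m n x w, w, rfl⟩, proj_lift m n x hx w⟩
  · rintro _ ⟨w, rfl⟩
    rw [bigZ_lift m n x hnil, proj_lift m n x hx, proj_lift m n x hx]
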